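/- arXiv:1803.05047 — 3 statements merged into one kernel-verified Lean document; each statement's English description precedes it below -/
import Mathlib

section
/- For every P in the subgroup 𝒮 of GL(3,ℂ) generated by S and X there exists P′ ∈ 𝒮 with P·T = T·P′, and for every P′ ∈ 𝒮 there exists P ∈ 𝒮 with P·T = T·P′; that is, 𝒮·T = T·𝒮 as subsets of GL(3,ℂ). -/
open Matrix Complex

noncomputable section

/-- ω = exp(2πi/3), a primitive third root of unity. -/
def ω : ℂ := exp (2 * Real.pi * I / 3)

/-- ζ = exp(2πi/9), a primitive ninth root of unity. -/
def ζ : ℂ := exp (2 * Real.pi * I / 9)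

/-- The qutrit Pauli X matrix. -/
def Xmat : Matrix (Fin 3) (Fin 3) ℂ := !![0,0,1; 1,0,0; 0,1,0]

/-- The qutrit Pauli Z matrix. -/
def Zmat : Matrix (Fin 3) (Fin 3) ℂ := !![1,0,0; 0,ω,0; 0,0,ω^2]

/-- The qutrit Hadamard matrix H = (1/(i√3))·[[1,1,1],[1,ω,ω²],[1,ω²,ω]]. -/
def Hmat : Matrix (Fin 3) (Fin 3) ℂ :=
  (I * (Real.sqrt 3 : ℂ))⁻¹ • !![1,1,1; 1,ω,ω^2; 1,ω^2,ω]

/-- The qutrit phase matrix S = ζ⁸·diag(1,1,ω). -/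
def Smat : Matrix (Fin 3) (Fin 3) ℂ := ζ^8 • !![1,0,0; 0,1,0; 0,0,ω]

/-- The qutrit T matrix T = diag(1,ζ,ζ⁸). -/
def Tmat : Matrix (Fin 3) (Fin 3) ℂ := !![1,0,0; 0,ζ,0; 0,0,ζ^8]

lemma omega_ne_zero : ω ≠ 0 := Complex.exp_ne_zero _
lemma zeta_ne_zero : ζ ≠ 0 := Complex.exp_ne_zero _

lemma omega_im_pos : 0 < ω.im := by
  have h : ω = Complex.exp ((2 * Real.pi / 3 : ℝ) * I) := by
    rw [ω]; push_cast; ring_nf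
  rw [h, Complex.exp_ofReal_mul_I_im]
  apply Real.sin_pos_of_pos_of_lt_pi
  · positivity
  · nlinarith [Real.pi_pos]

lemma omega_ne_one : ω ≠ 1 := by
  intro h
  have := omega_im_pos
  rw [h] at this
  simp at this

lemma omega_cube : ω ^ 3 = 1 := by
  rw [ω, ← Complex.exp_nat_mul]
  rw [show (3:ℕ) * (2 * Real.pi * I / 3) = 2 * Real.pi * I by push_cast; ring]
  exact Complex.exp_two_pi_mul_I

lemma detX : Xmat.det ≠ 0 := by
  simp [Xmat, Matrix.det_fin_three]

lemma detZ : Zmat.det ≠ 0 := by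
  simp [Zmat, Matrix.det_fin_three, omega_ne_zero]

lemma detS : Smat.det ≠ 0 := by
  simp [Smat, Matrix.det_fin_three, omega_ne_zero, zeta_ne_zero]

lemma detT : Tmat.det ≠ 0 := by
  simp [Tmat, Matrix.det_fin_three, zeta_ne_zero]

lemma detH : Hmat.det ≠ 0 := by
  rw [Hmat, Matrix.det_smul]
  apply mul_ne_zero
  · apply pow_ne_zero
    apply inv_ne_zero
    apply mul_ne_zero Complex.I_ne_zero
    simp [Complex.ofReal_ne_zero]
  · rw [Matrix.det_fin_three]
    simp [Matrix.vecHead, Matrix.vecTail]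
    intro h
    have h3 : ω ^ 3 = 1 := omega_cube
    have key : 3 * ω * (ω - 1) = 0 := by linear_combination h + ω * h3
    rcases mul_eq_zero.mp key with h' | h'
    · rcases mul_eq_zero.mp h' with h'' | h''
      · norm_num at h''
      · exact omega_ne_zero h''
    · exact omega_ne_one (by linear_combination h')

/-- X as an element of GL(3, ℂ). -/
def Xg : GL (Fin 3) ℂ := Matrix.GeneralLinearGroup.mkOfDetNeZero Xmat detX

/-- Z as an element of GL(3, ℂ). -/
def Zg : GL (Fin 3) ℂ := Matrix.GeneralLinearGroup.mkOfDetNeZero Zmat detZ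

/-- H as an element of GL(3, ℂ). -/
def Hg : GL (Fin 3) ℂ := Matrix.GeneralLinearGroup.mkOfDetNeZero Hmat detH

/-- S as an element of GL(3, ℂ). -/
def Sg : GL (Fin 3) ℂ := Matrix.GeneralLinearGroup.mkOfDetNeZero Smat detS

/-- T as an element of GL(3, ℂ). -/
def Tg : GL (Fin 3) ℂ := Matrix.GeneralLinearGroup.mkOfDetNeZero Tmat detT

/-- The Clifford group 𝒞: the subgroup of GL(3,ℂ) generated by H and S. -/
def Cliff : Subgroup (GL (Fin 3) ℂ) := Subgroup.closure {Hg, Sg}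

/-- The Clifford+T group: the subgroup of GL(3,ℂ) generated by H, S and T. -/
def CliffT : Subgroup (GL (Fin 3) ℂ) := Subgroup.closure {Hg, Sg, Tg}

/-- The subgroup 𝒮 of GL(3,ℂ) generated by S and X. -/
def Sgrp : Subgroup (GL (Fin 3) ℂ) := Subgroup.closure {Sg, Xg}

/-- Letters of words over the alphabet {H, S, T}. -/
inductive Letter : Type
  | H : Letter
  | S : Letter
  | T : Letter
  deriving DecidableEq

/-- The gate associated to a letter. -/
def Letter.g : Letter → GL (Fin 3) ℂ
  | .H => Hg
  | .S => Sg
  | .T => Tg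

/-- The product of the letters of a word. -/
def wordProd (w : List Letter) : GL (Fin 3) ℂ := (w.map Letter.g).prod

/-- The allowed prefixes of a canonical form: ε, T, H²T. -/
def Prefixes : Set (List Letter) := {[], [.T], [.H, .H, .T]}

/-- The allowed syllables of a canonical form: HT, H³T, SHT, SH³T, S²HT, S²H³T. -/
def Syllables : Set (List Letter) :=
  {[.H, .T], [.H, .H, .H, .T], [.S, .H, .T],
   [.S, .H, .H, .H, .T], [.S, .S, .H, .T], [.S, .S, .H, .H, .H, .T]}

/-- The T-count of a canonical form with prefix `p` and syllable list `ss`: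
`k` if the prefix is empty and `k+1` otherwise, where `k` is the number of syllables. -/
def TCount (p : List Letter) (ss : List (List Letter)) : ℕ :=
  ss.length + (if p = [] then 0 else 1)

/-- P₊ = (P + P²)/√6. -/
def Pplus (P : Matrix (Fin 3) (Fin 3) ℂ) : Matrix (Fin 3) (Fin 3) ℂ :=
  ((Real.sqrt 6 : ℂ))⁻¹ • (P + P ^ 2)

/-- P₋ = i(P − P²)/√6. -/
def Pminus (P : Matrix (Fin 3) (Fin 3) ℂ) : Matrix (Fin 3) (Fin 3) ℂ :=
  (I * ((Real.sqrt 6 : ℂ))⁻¹) • (P - P ^ 2)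

/-- The ordered tuple (Q₁, …, Q₈) = (Z₊, X₊, (XZ)₊, (XZ²)₊, Z₋, X₋, (XZ)₋, (XZ²)₋). -/
def Q : Fin 8 → Matrix (Fin 3) (Fin 3) ℂ :=
  ![Pplus Zmat, Pplus Xmat, Pplus (Xmat * Zmat), Pplus (Xmat * Zmat ^ 2),
    Pminus Zmat, Pminus Xmat, Pminus (Xmat * Zmat), Pminus (Xmat * Zmat ^ 2)]

/-- The adjoint representation Û of U, the 8×8 real matrix with
entries Û_{ij} = tr(Qᵢ U Qⱼ U†). -/
def adj (U : Matrix (Fin 3) (Fin 3) ℂ) : Matrix (Fin 8) (Fin 8) ℝ :=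
  Matrix.of fun i j => (Matrix.trace (Q i * U * Q j * Uᴴ)).re

/-- The top-left 4×4 quadrant Û₊₊. -/
def blockPP (A : Matrix (Fin 8) (Fin 8) ℝ) : Matrix (Fin 4) (Fin 4) ℝ :=
  Matrix.of fun i j => A ⟨i.val, by omega⟩ ⟨j.val, by omega⟩

/-- The top-right 4×4 quadrant Û₊₋. -/
def blockPM (A : Matrix (Fin 8) (Fin 8) ℝ) : Matrix (Fin 4) (Fin 4) ℝ :=
  Matrix.of fun i j => A ⟨i.val, by omega⟩ ⟨j.val + 4, by omega⟩

/-- The bottom-left 4×4 quadrant Û₋₊. -/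
def blockMP (A : Matrix (Fin 8) (Fin 8) ℝ) : Matrix (Fin 4) (Fin 4) ℝ :=
  Matrix.of fun i j => A ⟨i.val + 4, by omega⟩ ⟨j.val, by omega⟩

/-- The bottom-right 4×4 quadrant Û₋₋. -/
def blockMM (A : Matrix (Fin 8) (Fin 8) ℝ) : Matrix (Fin 4) (Fin 4) ℝ :=
  Matrix.of fun i j => A ⟨i.val + 4, by omega⟩ ⟨j.val + 4, by omega⟩

/-- α = sin(2π/9). -/
def αR : ℝ := Real.sin (2 * Real.pi / 9)

/-- The ring ℤ[α]: the subring of ℝ generated by 1/2 and α. -/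
def Zα : Subring ℝ := Subring.closure {1/2, αR}

/-- The ring ℤ[1/2, 1/α]: the subring of ℝ generated by 1/2, α and α⁻¹. -/
def Zhα : Subring ℝ := Subring.closure {1/2, αR, αR⁻¹}

lemma alpha_mem_Zα : αR ∈ Zα := Subring.subset_closure (by simp)

/-!
Conjugation by `X` permutes the entries of a diagonal matrix cyclically, so
`X T X⁻¹ = diag(ζ⁸, 1, ζ)`, which equals `T S` because `ζ⁹ = 1`. Hence `T⁻¹ X T = S X`, while
`T⁻¹ S T = S` since `S` and `T` are diagonal: conjugation by `T` carries the generating pair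
`{S, S X}` of `𝒮` to the generating pair `{S, X}`, so `T` normalizes `𝒮`.
-/

section Group

variable {G : Type*} [Group G] {g : G}

lemma closure_pair_mul_right (a b : G) :
    Subgroup.closure {a, a * b} = Subgroup.closure {a, b} := by
  apply le_antisymm <;> rw [Subgroup.closure_le, Set.pair_subset_iff]
  · have ha : a ∈ Subgroup.closure {a, b} := Subgroup.mem_closure_of_mem (by simp)
    have hb : b ∈ Subgroup.closure {a, b} := Subgroup.mem_closure_of_mem (by simp)
    exact ⟨ha, mul_mem ha hb⟩
  · have ha : a ∈ Subgroup.closure {a, a * b} := Subgroup.mem_closure_of_mem (by simp)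
    have hab : a * b ∈ Subgroup.closure {a, a * b} := Subgroup.mem_closure_of_mem (by simp)
    exact ⟨ha, (mul_mem_cancel_left ha).mp hab⟩

lemma mem_normalizer_closure_pair_of_semiconjBy {a b : G} (ha : Commute g a)
    (hb : SemiconjBy g (a * b) b) :
    g ∈ Subgroup.normalizer (Subgroup.closure {a, b}) := by
  have hga : MulAut.conj g a = a := mul_inv_eq_of_eq_mul ha
  have hgb : MulAut.conj g (a * b) = b := mul_inv_eq_of_eq_mul hb
  rw [Subgroup.mem_normalizer_iff_map_conj_eq]
  calc (Subgroup.closure {a, b}).map (MulAut.conj g : G →* G)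
      = (Subgroup.closure {a, a * b}).map (MulAut.conj g : G →* G) := by
        rw [closure_pair_mul_right]
    _ = Subgroup.closure {a, b} := by
        rw [MonoidHom.map_closure, Set.image_pair, MonoidHom.coe_coe, hga, hgb]

lemma exists_mul_eq_mul_of_mem_normalizer {H : Subgroup G} (hg : g ∈ Subgroup.normalizer H) :
    (∀ h ∈ H, ∃ h' ∈ H, h * g = g * h') ∧ (∀ h' ∈ H, ∃ h ∈ H, h * g = g * h') :=
  ⟨fun h hh ↦ ⟨g⁻¹ * h * g, (Subgroup.mem_normalizer_iff''.mp hg h).mp hh, by group⟩,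
    fun h' hh' ↦ ⟨g * h' * g⁻¹, (Subgroup.mem_normalizer_iff.mp hg h').mp hh', by group⟩⟩

end Group

lemma zeta_pow_three : ζ ^ 3 = ω := by
  rw [ζ, ω, ← Complex.exp_nat_mul]
  congr 1
  push_cast
  ring

lemma zeta_pow_nine : ζ ^ 9 = 1 := by
  rw [pow_mul ζ 3 3, zeta_pow_three, omega_cube]

lemma Tmat_eq_diagonal : Tmat = diagonal ![1, ζ, ζ ^ 8] :=
  (diagonal_vec3 _ _ _).symm

lemma Smat_eq_diagonal : Smat = diagonal ![ζ ^ 8, ζ ^ 8, ζ ^ 2] := by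
  have h : ζ ^ 8 * ω = ζ ^ 2 := by
    rw [← zeta_pow_three]
    linear_combination ζ ^ 2 * zeta_pow_nine
  simp [Smat, diagonal_vec3, h]

lemma Xmat_mul_diagonal (d : Fin 3 → ℂ) :
    Xmat * diagonal d = diagonal ![d 2, d 0, d 1] * Xmat := by
  simp [Xmat, diagonal_fin_three]

lemma Tmat_mul_Smat : Tmat * Smat = diagonal ![ζ ^ 8, 1, ζ] := by
  have h : ζ ^ 8 * ζ ^ 2 = ζ := by linear_combination ζ * zeta_pow_nine
  have h' : ζ * ζ ^ 8 = 1 := by rw [← pow_succ', zeta_pow_nine]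
  simp [Tmat_eq_diagonal, Smat_eq_diagonal, diagonal_vec3, h, h']

lemma Xmat_mul_Tmat : Xmat * Tmat = Tmat * (Smat * Xmat) :=
  calc Xmat * Tmat = diagonal ![ζ ^ 8, 1, ζ] * Xmat := by
        rw [Tmat_eq_diagonal, Xmat_mul_diagonal]
        rfl
    _ = Tmat * (Smat * Xmat) := by rw [← Tmat_mul_Smat, Matrix.mul_assoc]

lemma commute_Tmat_Smat : Commute Tmat Smat := by
  rw [Tmat_eq_diagonal, Smat_eq_diagonal]
  exact commute_diagonal _ _

lemma commute_Tg_Sg : Commute Tg Sg :=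
  Units.ext commute_Tmat_Smat

lemma semiconjBy_Tg_Sg_mul_Xg : SemiconjBy Tg (Sg * Xg) Xg :=
  Units.ext Xmat_mul_Tmat.symm

lemma Tg_mem_normalizer_Sgrp : Tg ∈ Subgroup.normalizer Sgrp :=
  mem_normalizer_closure_pair_of_semiconjBy commute_Tg_Sg semiconjBy_Tg_Sg_mul_Xg

/-- For every P in the subgroup 𝒮 of GL(3,ℂ) generated by S and X
there exists P′ ∈ 𝒮 with P·T = T·P′, and for every P′ ∈ 𝒮 there exists P ∈ 𝒮 with
P·T = T·P′; that is, 𝒮·T = T·𝒮 as subsets of GL(3,ℂ). -/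
theorem S_T_commutation :
    (∀ P ∈ Sgrp, ∃ P' ∈ Sgrp, P * Tg = Tg * P') ∧
    (∀ P' ∈ Sgrp, ∃ P ∈ Sgrp, P * Tg = Tg * P') :=
  exists_mul_eq_mul_of_mem_normalizer Tg_mem_normalizer_Sgrp

end
end

section
/- For every element U of the Clifford+T group and all indices i, j ∈ {1,…,8}, the entry tr(Qᵢ U Qⱼ U†) of the adjoint representation Û is a real number lying in the subring ℤ[1/2,1/α] of ℝ generated by 1/2, α, and α⁻¹, where α = sin(2π/9). -/
open Matrix Complex

noncomputable section

/-!
The generators H, S, T have determinant 1 and entries in ℤ[ζ, 1/3] (note i√3 = 1 + 2ω), so the whole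
group consists of matrices over that ring. It lies in R[i] for R = ℤ[1/2, 1/α], because
ζ = cos(2π/9) + iα, where cos(2π/9) = cos(16π/9) is a polynomial in cos(4π/9) = 1 - 2α², and because
squaring sin(6π/9) = √3/2 exhibits 3 as a divisor of 64α⁶. Since √6·Qᵢ has entries in R[i] as well,
6·tr(Qᵢ U Qⱼ U†) lies in R[i]; the Qᵢ being Hermitian, the trace is real.
-/

section Matrices

variable {n : Type*} [Fintype n] [DecidableEq n]

lemma trace_mem_of_mem_matrix {A : Type*} [Ring A] {S : Subring A} {M : Matrix n n A}
    (hM : M ∈ S.matrix) : M.trace ∈ S :=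
  S.sum_mem fun i _ => hM i i

lemma smul_mem_matrix {A : Type*} [Ring A] {S : Subring A} {c : A} {M : Matrix n n A}
    (hc : c ∈ S) (hM : M ∈ S.matrix) : c • M ∈ S.matrix :=
  fun i j => S.mul_mem hc (hM i j)

lemma adjugate_mem_matrix {A : Type*} [CommRing A] {S : Subring A} {M : Matrix n n A}
    (hM : M ∈ S.matrix) : M.adjugate ∈ S.matrix := by
  let N : Matrix n n S := of fun i j => ⟨M i j, hM i j⟩
  have hN : S.subtype.mapMatrix N.adjugate = M.adjugate := S.subtype.map_adjugate N
  intro i j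
  rw [← hN]
  exact (N.adjugate i j).2

lemma mem_units_matrix_of_det_eq_one {A : Type*} [CommRing A] {S : Subring A} {g : GL n A}
    (hg : (g : Matrix n n A) ∈ S.matrix) (hdet : (g : Matrix n n A).det = 1) :
    g ∈ S.matrix.toSubmonoid.units := by
  refine (Submonoid.mem_units_iff _ g).2 ⟨hg, ?_⟩
  have hinv : ((g⁻¹ : GL n A) : Matrix n n A) = (g : Matrix n n A).adjugate := by
    rw [Matrix.coe_units_inv, Matrix.inv_def, hdet, Ring.inverse_one, one_smul]
  exact hinv ▸ adjugate_mem_matrix hg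

lemma isSelfAdjoint_trace_mul {m A : Type*} [Fintype m] [CommRing A] [StarRing A]
    {M N : Matrix m m A} (hM : M.IsHermitian) (hN : N.IsHermitian) :
    IsSelfAdjoint (M * N).trace := by
  rw [isSelfAdjoint_iff, ← trace_conjTranspose, conjTranspose_mul, hM.eq, hN.eq, trace_mul_comm]

end Matrices

section AdjoinI

/-- The subring `R[i]` of `ℂ` obtained from a subring `R` of `ℝ`, encoded as the set of complex
numbers with real and imaginary parts in `R`. -/
def adjoinI (R : Subring ℝ) : Subring ℂ where
  carrier := {z | z.re ∈ R ∧ z.im ∈ R}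
  mul_mem' := fun {_ _} ⟨ha, ha'⟩ ⟨hb, hb'⟩ =>
    ⟨R.sub_mem (R.mul_mem ha hb) (R.mul_mem ha' hb'),
      R.add_mem (R.mul_mem ha hb') (R.mul_mem ha' hb)⟩
  one_mem' := ⟨R.one_mem, R.zero_mem⟩
  add_mem' := fun ⟨ha, ha'⟩ ⟨hb, hb'⟩ => ⟨R.add_mem ha hb, R.add_mem ha' hb'⟩
  zero_mem' := ⟨R.zero_mem, R.zero_mem⟩
  neg_mem' := fun ⟨ha, ha'⟩ => ⟨R.neg_mem ha, R.neg_mem ha'⟩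

variable {R : Subring ℝ}

lemma mem_adjoinI {z : ℂ} : z ∈ adjoinI R ↔ z.re ∈ R ∧ z.im ∈ R :=
  Iff.rfl

lemma ofReal_mem_adjoinI {r : ℝ} : (r : ℂ) ∈ adjoinI R ↔ r ∈ R := by
  simp [mem_adjoinI, R.zero_mem]

lemma I_mem_adjoinI : I ∈ adjoinI R :=
  ⟨R.zero_mem, R.one_mem⟩

lemma star_mem_adjoinI {z : ℂ} (hz : z ∈ adjoinI R) : star z ∈ adjoinI R :=
  ⟨hz.1, R.neg_mem hz.2⟩

lemma conjTranspose_mem_matrix_adjoinI {n : Type*} [Fintype n] [DecidableEq n]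
    {M : Matrix n n ℂ} (hM : M ∈ (adjoinI R).matrix) : Mᴴ ∈ (adjoinI R).matrix :=
  fun i j => star_mem_adjoinI (hM j i)

end AdjoinI

section RootsOfUnity

lemma one_add_omega_add_omega_sq : 1 + ω + ω ^ 2 = 0 := by
  have h : (ω - 1) * (1 + ω + ω ^ 2) = 0 := by linear_combination omega_cube
  exact (mul_eq_zero.mp h).resolve_left (sub_ne_zero.mpr omega_ne_one)

lemma I_mul_sqrt_three : I * (√3 : ℝ) = 1 + 2 * ω := by
  have hω : ω = exp ((2 * (Real.pi / 3) : ℝ) * I) := by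
    rw [ω]
    push_cast
    ring_nf
  have hcos : Real.cos (2 * (Real.pi / 3)) = -1 / 2 := by
    rw [Real.cos_two_mul, Real.cos_pi_div_three]
    norm_num
  have hsin : Real.sin (2 * (Real.pi / 3)) = √3 / 2 := by
    rw [Real.sin_two_mul, Real.sin_pi_div_three, Real.cos_pi_div_three]
    ring
  rw [hω, exp_mul_I, ← ofReal_cos, ← ofReal_sin, hcos, hsin]
  push_cast
  ring

lemma conj_eq_sq_of_pow_three_eq_one {z : ℂ} (hz : z ^ 3 = 1) :
    (starRingEnd ℂ) z = z ^ 2 := by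
  rw [← inv_eq_conj (norm_eq_one_of_pow_eq_one hz three_ne_zero)]
  exact inv_eq_of_mul_eq_one_right (by rw [← pow_succ', hz])

end RootsOfUnity

section Generators

lemma Hmat_eq_smul : Hmat = (-(1 + 2 * ω) * (3 : ℂ)⁻¹) • !![1, 1, 1; 1, ω, ω ^ 2; 1, ω ^ 2, ω] := by
  rw [Hmat, I_mul_sqrt_three]
  congr 1
  refine inv_eq_of_mul_eq_one_right ?_
  linear_combination (-4 / 3 : ℂ) * one_add_omega_add_omega_sq

lemma det_Hmat : Hmat.det = 1 := by
  have hω := one_add_omega_add_omega_sq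
  rw [Hmat_eq_smul, det_smul, det_fin_three]
  simp only [Fintype.card_fin, of_apply, cons_val', cons_val_zero, cons_val_one, cons_val,
    cons_val_fin_one]
  grind

lemma det_Smat : Smat.det = 1 := by
  rw [Smat, det_smul, det_fin_three]
  simp only [Fintype.card_fin, of_apply, cons_val', cons_val_zero, cons_val_one, cons_val,
    cons_val_fin_one, ← zeta_pow_three]
  grind [zeta_pow_nine]

lemma det_Tmat : Tmat.det = 1 := by
  rw [Tmat, det_fin_three]
  simp only [of_apply, cons_val', cons_val_zero, cons_val_one, cons_val, cons_val_fin_one]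
  grind [zeta_pow_nine]

variable {S : Subring ℂ}

lemma omega_mem_of_zeta_mem (hζ : ζ ∈ S) : ω ∈ S :=
  zeta_pow_three ▸ S.pow_mem hζ 3

lemma Hmat_mem_matrix (hω : ω ∈ S) (h3 : (3 : ℂ)⁻¹ ∈ S) : Hmat ∈ S.matrix := by
  rw [Hmat_eq_smul]
  refine smul_mem_matrix (S.mul_mem (S.neg_mem ?_) h3) ?_
  · exact S.add_mem S.one_mem (S.mul_mem (ofNat_mem S 2) hω)
  · intro i j
    fin_cases i <;> fin_cases j <;> simp [S.one_mem, hω, S.pow_mem hω 2]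

lemma Smat_mem_matrix (hζ : ζ ∈ S) : Smat ∈ S.matrix := by
  refine smul_mem_matrix (S.pow_mem hζ 8) fun i j => ?_
  fin_cases i <;> fin_cases j <;> simp [S.one_mem, S.zero_mem, omega_mem_of_zeta_mem hζ]

lemma Tmat_mem_matrix (hζ : ζ ∈ S) : Tmat ∈ S.matrix := by
  intro i j
  fin_cases i <;> fin_cases j <;> simp [Tmat, S.one_mem, S.zero_mem, hζ, S.pow_mem hζ 8]

lemma CliffT_le_units_matrix (hζ : ζ ∈ S) (h3 : (3 : ℂ)⁻¹ ∈ S) :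
    CliffT ≤ S.matrix.toSubmonoid.units := by
  rw [CliffT, Subgroup.closure_le]
  rintro g (rfl | rfl | rfl)
  · exact mem_units_matrix_of_det_eq_one
      (Hmat_mem_matrix (omega_mem_of_zeta_mem hζ) h3) det_Hmat
  · exact mem_units_matrix_of_det_eq_one (Smat_mem_matrix hζ) det_Smat
  · exact mem_units_matrix_of_det_eq_one (Tmat_mem_matrix hζ) det_Tmat

end Generators

section Paulis

lemma Zmat_pow_eq_diagonal (k : ℕ) : Zmat ^ k = diagonal ![1, ω ^ k, (ω ^ k) ^ 2] := by
  have hZ : Zmat = diagonal ![1, ω, ω ^ 2] := by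
    ext i j
    fin_cases i <;> fin_cases j <;> rfl
  rw [hZ, diagonal_pow]
  congr 1
  ext i
  fin_cases i <;> simp [pow_right_comm]

lemma conjTranspose_Zmat : Zmatᴴ = Zmat ^ 2 := by
  have hZ := Zmat_pow_eq_diagonal 1
  rw [pow_one, pow_one] at hZ
  rw [Zmat_pow_eq_diagonal, hZ, diagonal_conjTranspose]
  congr 1
  ext i
  fin_cases i <;> simp [conj_eq_sq_of_pow_three_eq_one omega_cube]

lemma conjTranspose_Xmat_mul_diagonal {z : ℂ} (hz : z ^ 3 = 1) :
    (Xmat * diagonal ![1, z, z ^ 2])ᴴ = (Xmat * diagonal ![1, z, z ^ 2]) ^ 2 := by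
  have hX : Xmat * diagonal ![1, z, z ^ 2] = !![0, 0, z ^ 2; 1, 0, 0; 0, z, 0] := by
    ext i j
    fin_cases i <;> fin_cases j <;> simp [Xmat]
  rw [pow_two (Xmat * _), hX]
  ext i j
  fin_cases i <;> fin_cases j <;>
    simp [mul_apply, Fin.sum_univ_three, conj_eq_sq_of_pow_three_eq_one hz]
  all_goals grind

lemma conjTranspose_Xmat_mul_Zmat_pow (k : ℕ) :
    (Xmat * Zmat ^ k)ᴴ = (Xmat * Zmat ^ k) ^ 2 := by
  rw [Zmat_pow_eq_diagonal]
  exact conjTranspose_Xmat_mul_diagonal (by rw [pow_right_comm, omega_cube, one_pow])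

lemma Xmat_mem_matrix {S : Subring ℂ} : Xmat ∈ S.matrix := by
  intro i j
  fin_cases i <;> fin_cases j <;> simp [Xmat, S.one_mem, S.zero_mem]

lemma Zmat_mem_matrix {S : Subring ℂ} (hω : ω ∈ S) : Zmat ∈ S.matrix := by
  intro i j
  fin_cases i <;> fin_cases j <;> simp [Zmat, S.one_mem, S.zero_mem, hω, S.pow_mem hω 2]

lemma Pplus_isHermitian {P : Matrix (Fin 3) (Fin 3) ℂ} (hP : Pᴴ = P ^ 2) :
    (Pplus P).IsHermitian := by
  have hsum : (P + P ^ 2).IsHermitian := hP ▸ isHermitian_add_transpose_self P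
  exact hsum.smul (by simp [isSelfAdjoint_iff])

lemma Pminus_isHermitian {P : Matrix (Fin 3) (Fin 3) ℂ} (hP : Pᴴ = P ^ 2) :
    (Pminus P).IsHermitian := by
  rw [IsHermitian, Pminus, ← hP]
  simp [conjTranspose_smul, ← smul_neg]

lemma exists_Q_eq_Pplus_or_Pminus {S : Subring ℂ} (hω : ω ∈ S) (i : Fin 8) :
    ∃ P ∈ S.matrix, Pᴴ = P ^ 2 ∧ (Q i = Pplus P ∨ Q i = Pminus P) := by
  have hXZ (k : ℕ) : Xmat * Zmat ^ k ∈ S.matrix :=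
    mul_mem Xmat_mem_matrix (pow_mem (Zmat_mem_matrix hω) k)
  have hH := conjTranspose_Xmat_mul_Zmat_pow
  fin_cases i
  · exact ⟨_, Zmat_mem_matrix hω, conjTranspose_Zmat, .inl rfl⟩
  · exact ⟨_, hXZ 0, hH 0, .inl (by simp [Q])⟩
  · exact ⟨_, hXZ 1, hH 1, .inl (by simp [Q])⟩
  · exact ⟨_, hXZ 2, hH 2, .inl rfl⟩
  · exact ⟨_, Zmat_mem_matrix hω, conjTranspose_Zmat, .inr rfl⟩
  · exact ⟨_, hXZ 0, hH 0, .inr (by simp [Q])⟩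
  · exact ⟨_, hXZ 1, hH 1, .inr (by simp [Q])⟩
  · exact ⟨_, hXZ 2, hH 2, .inr rfl⟩

lemma Q_isHermitian (i : Fin 8) : (Q i).IsHermitian := by
  obtain ⟨P, -, hP, h | h⟩ := exists_Q_eq_Pplus_or_Pminus (Subring.mem_top ω) i
  · exact h ▸ Pplus_isHermitian hP
  · exact h ▸ Pminus_isHermitian hP

lemma sqrt_six_smul_Q_mem_matrix {S : Subring ℂ} (hω : ω ∈ S) (hI : I ∈ S) (i : Fin 8) :
    ((√6 : ℝ) : ℂ) • Q i ∈ S.matrix := by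
  have h6 : ((√6 : ℝ) : ℂ) ≠ 0 := by simp
  obtain ⟨P, hPS, -, h | h⟩ := exists_Q_eq_Pplus_or_Pminus hω i
  · rw [h, Pplus, smul_inv_smul₀ h6]
    exact add_mem hPS (pow_mem hPS 2)
  · rw [h, Pminus, smul_smul, mul_left_comm, mul_inv_cancel₀ h6, mul_one]
    exact smul_mem_matrix hI (sub_mem hPS (pow_mem hPS 2))

end Paulis

section RealRing

lemma half_mem_Zhα : (2 : ℝ)⁻¹ ∈ Zhα :=
  one_div (2 : ℝ) ▸ Subring.subset_closure (by simp)

lemma alpha_mem_Zhα : αR ∈ Zhα :=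
  Subring.subset_closure (by simp)

lemma alpha_inv_mem_Zhα : αR⁻¹ ∈ Zhα :=
  Subring.subset_closure (by simp)

lemma alpha_pos : 0 < αR :=
  Real.sin_pos_of_pos_of_lt_pi (by positivity) (by linarith [Real.pi_pos])

lemma alpha_pow_six_eq : 64 * αR ^ 6 = 3 * (32 * αR ^ 4 - 12 * αR ^ 2 + 1) := by
  have htriple : √3 / 2 = 3 * αR - 4 * αR ^ 3 := by
    rw [αR, ← Real.sin_three_mul, ← Real.sin_pi_div_three, ← Real.sin_pi_sub]
    ring_nf
  have hsq : (√3 / 2) ^ 2 = 3 / 4 := by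
    rw [div_pow, Real.sq_sqrt (by norm_num)]
    norm_num
  rw [htriple] at hsq
  linear_combination 4 * hsq

lemma third_mem_Zhα : (3 : ℝ)⁻¹ ∈ Zhα := by
  have hthird : (3 : ℝ)⁻¹ = (32 * αR ^ 4 - 12 * αR ^ 2 + 1) * (2⁻¹ * αR⁻¹) ^ 6 := by
    have hα := alpha_pos.ne'
    field_simp
    linear_combination alpha_pow_six_eq
  have hterm (c k : ℕ) : c * αR ^ k ∈ Zhα :=
    mul_mem (natCast_mem Zhα c) (pow_mem alpha_mem_Zhα k)
  rw [hthird]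
  exact mul_mem (add_mem (sub_mem (hterm 32 4) (hterm 12 2)) (one_mem _))
    (pow_mem (mul_mem half_mem_Zhα alpha_inv_mem_Zhα) 6)

lemma cos_two_mul_mem {R : Subring ℝ} {θ : ℝ} (h : Real.cos θ ∈ R) : Real.cos (2 * θ) ∈ R := by
  rw [Real.cos_two_mul]
  exact sub_mem (mul_mem (ofNat_mem R 2) (pow_mem h 2)) (one_mem R)

lemma cos_two_mul_mem_of_sin_mem {R : Subring ℝ} {θ : ℝ} (h : Real.sin θ ∈ R) :
    Real.cos (2 * θ) ∈ R := by
  rw [Real.cos_two_mul_eq_one_sub]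
  exact sub_mem (one_mem R) (mul_mem (ofNat_mem R 2) (pow_mem h 2))

lemma cos_two_pi_div_nine_mem_Zhα : Real.cos (2 * Real.pi / 9) ∈ Zhα := by
  have hcos : Real.cos (2 * Real.pi / 9) = Real.cos (2 * (2 * (2 * (2 * Real.pi / 9)))) := by
    rw [← Real.cos_two_pi_sub]
    ring_nf
  rw [hcos]
  exact cos_two_mul_mem (cos_two_mul_mem (cos_two_mul_mem_of_sin_mem alpha_mem_Zhα))

lemma zeta_mem_adjoinI_Zhα : ζ ∈ adjoinI Zhα := by
  have hζ : ζ = exp ((2 * Real.pi / 9 : ℝ) * I) := by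
    rw [ζ]
    push_cast
    ring_nf
  rw [hζ, mem_adjoinI, exp_ofReal_mul_I_re, exp_ofReal_mul_I_im]
  exact ⟨cos_two_pi_div_nine_mem_Zhα, alpha_mem_Zhα⟩

lemma third_mem_adjoinI_Zhα : (3 : ℂ)⁻¹ ∈ adjoinI Zhα := by
  simpa using ofReal_mem_adjoinI.2 third_mem_Zhα

lemma sixth_mem_adjoinI_Zhα : (6 : ℂ)⁻¹ ∈ adjoinI Zhα := by
  have h6 : (6 : ℂ)⁻¹ = ((2⁻¹ * 3⁻¹ : ℝ) : ℂ) := by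
    push_cast
    norm_num
  exact h6 ▸ ofReal_mem_adjoinI.2 (mul_mem half_mem_Zhα third_mem_Zhα)

end RealRing

section Trace

lemma trace_Q_mul_mem_adjoinI {U : Matrix (Fin 3) (Fin 3) ℂ} (hU : U ∈ (adjoinI Zhα).matrix)
    (i j : Fin 8) : (Q i * U * Q j * Uᴴ).trace ∈ adjoinI Zhα := by
  have hQ := sqrt_six_smul_Q_mem_matrix (omega_mem_of_zeta_mem zeta_mem_adjoinI_Zhα) I_mem_adjoinI
  have h6 : ((√6 : ℝ) : ℂ) * (√6 : ℝ) = 6 := by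
    rw [← ofReal_mul, Real.mul_self_sqrt (by norm_num)]
    norm_num
  have hscale : Q i * U * Q j * Uᴴ
      = (6 : ℂ)⁻¹ • (((√6 : ℝ) : ℂ) • Q i * U * (((√6 : ℝ) : ℂ) • Q j) * Uᴴ) := by
    simp only [Matrix.smul_mul, Matrix.mul_smul, smul_smul, mul_assoc, h6]
    norm_num
  rw [hscale]
  exact trace_mem_of_mem_matrix <| smul_mem_matrix sixth_mem_adjoinI_Zhα <|
    mul_mem (mul_mem (mul_mem (hQ i) hU) (hQ j)) (conjTranspose_mem_matrix_adjoinI hU)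

theorem adjoint_entries_in_ring_general {U : Matrix (Fin 3) (Fin 3) ℂ}
    (hU : U ∈ (adjoinI Zhα).matrix) (i j : Fin 8) :
    ∃ r : ℝ, r ∈ Zhα ∧ (Q i * U * Q j * Uᴴ).trace = (r : ℂ) := by
  have hreal : IsSelfAdjoint (Q i * U * Q j * Uᴴ).trace := by
    rw [Matrix.mul_assoc (Q i * U), Matrix.mul_assoc (Q i), ← Matrix.mul_assoc U]
    exact isSelfAdjoint_trace_mul (Q_isHermitian i)
      (isHermitian_mul_mul_conjTranspose U (Q_isHermitian j))
  exact ⟨_, (trace_Q_mul_mem_adjoinI hU i j).1, (conj_eq_iff_re.1 hreal).symm⟩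

end Trace

/-- For every element U of the Clifford+T group and all indices
i, j ∈ {1,…,8}, the entry tr(Qᵢ U Qⱼ U†) of the adjoint representation Û is a real
number lying in the subring ℤ[1/2,1/α] of ℝ generated by 1/2, α, and α⁻¹,
where α = sin(2π/9). -/
theorem adjoint_entries_in_ring :
    ∀ U ∈ CliffT, ∀ i j : Fin 8, ∃ r : ℝ, r ∈ Zhα ∧
      Matrix.trace (Q i * (U : Matrix (Fin 3) (Fin 3) ℂ) * Q j *
        ((U : Matrix (Fin 3) (Fin 3) ℂ))ᴴ) = (r : ℂ) := by
  intro U hU i j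
  have hunit := CliffT_le_units_matrix zeta_mem_adjoinI_Zhα third_mem_adjoinI_Zhα hU
  exact adjoint_entries_in_ring_general ((Submonoid.mem_units_iff _ U).1 hunit).1 i j

end
end

section
/- For every element C of the Clifford group 𝒞, every entry of the adjoint representation Ĉ lies in the set {0, 1, −1, 1/2, −1/2, √3/2, −√3/2}; the quadrants Ĉ₊₊ and Ĉ₋₋ are generalized permutation matrices (exactly one nonzero entry in each row and each column) with nonzero entries in {±1, ±1/2} and with the same nonzero pattern as each other; and the quadrants Ĉ₊₋ and Ĉ₋₊ have at most one nonzero entry per row and per column, with all nonzero entries in {±√3/2}, and share the same nonzero pattern. In particular every entry of Ĉ lies in the subring ℤ[α] of ℝ generated by 1/2 and α = sin(2π/9). -/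
open Matrix Complex

noncomputable section

/-!
Up to scalars, `H` is the Fourier transform of `ℤ/3` and `S` is a chirp, so conjugation by a
Clifford operator carries each Weyl operator `X^i Z^j` to another one, up to a cube root of unity,
through an automorphism of the phase space `(ℤ/3)²`. Such an automorphism permutes the four lines
through the origin, which are spanned by the exponents of `Z, X, XZ, XZ²`. Hence it sends each `P`
among these operators to some `P'` among them in such a way that `C P C†` is `z P'` or `z P'²` for
a cube root of unity `z`.

The matrices `P₊, P₋` form an orthonormal family. In the plane of `P'₊, P'₋` the phase `z` acts as
the rotation by `(re z, im z)`, and exchanging `P'` with `P'²` is the reflection `P'₋ ↦ -P'₋`.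
Hence the four quadrants are supported on one common permutation, with entries `± re z` in the
diagonal quadrants and `± im z` in the other two, where `re z ∈ {1, -1/2}` and
`im z ∈ {0, ±√3/2}`. Finally `√3/2 = sin (3 · 2π/9)` is a polynomial in `α` by the triple-angle
formula.
-/

section Weyl

variable {R 𝕜 : Type*} [CommRing R] [DecidableEq R] [CommRing 𝕜] (χ : AddChar R 𝕜)

/-- The Weyl operator `X^i Z^j` attached to the phase-space point `v = (i, j)`, where `X` is the
shift `e_l ↦ e_{l+1}` and `Z` the clock `e_l ↦ χ l • e_l`. -/
def weyl (v : R × R) : Matrix R R 𝕜 :=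
  of fun k l => if k = l + v.1 then χ (v.2 * l) else 0

/-- The unnormalized discrete Fourier transform of `R` with respect to `χ`. -/
def fourierMatrix : Matrix R R 𝕜 :=
  of fun k l => χ (k * l)

/-- The chirp with phase function `f`, that is, the diagonal matrix with entries `χ (f k)`. -/
def chirp (f : R → R) : Matrix R R 𝕜 :=
  diagonal fun k => χ (f k)

lemma weyl_apply (v : R × R) (k l : R) :
    weyl χ v k l = if k = l + v.1 then χ (v.2 * l) else 0 := rfl

lemma weyl_zero : weyl χ 0 = 1 := by
  ext k l
  simp [weyl_apply, Matrix.one_apply]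

variable [Fintype R]

lemma weyl_mul (v w : R × R) : weyl χ v * weyl χ w = χ (v.2 * w.1) • weyl χ (v + w) := by
  ext k l
  simp only [mul_apply, weyl_apply, Matrix.smul_apply, smul_eq_mul, mul_ite, mul_zero,
    Finset.sum_ite_eq', Finset.mem_univ, if_true, ite_mul, zero_mul, Prod.fst_add, Prod.snd_add,
    add_assoc, add_comm v.1]
  congr 1
  rw [← AddChar.map_add_eq_mul, ← AddChar.map_add_eq_mul]
  ring_nf

lemma weyl_sq (v : R × R) : weyl χ v ^ 2 = χ (v.2 * v.1) • weyl χ (2 • v) := by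
  rw [sq, weyl_mul, two_nsmul]

lemma trace_weyl [IsDomain 𝕜] {χ : AddChar R 𝕜} (hχ : χ.IsPrimitive) (v : R × R) :
    trace (weyl χ v) = if v = 0 then (Fintype.card R : 𝕜) else 0 := by
  obtain ⟨i, j⟩ := v
  by_cases hi : i = 0
  · simpa [trace, weyl_apply, hi, mul_comm j] using AddChar.sum_mulShift j hχ
  · simp [trace, weyl_apply, hi]

lemma fourierMatrix_semiconjBy_weyl (v : R × R) :
    SemiconjBy (fourierMatrix χ) (weyl χ v) (χ (-(v.1 * v.2)) • weyl χ (-v.2, v.1)) := by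
  ext k l
  have hk (m : R) : k = m + -v.2 ↔ k + v.2 = m := by rw [← sub_eq_add_neg, eq_sub_iff_add_eq]
  simp only [fourierMatrix, mul_apply, weyl_apply, of_apply, Matrix.smul_apply, smul_eq_mul,
    mul_ite, hk, mul_zero, ite_mul, zero_mul, Finset.sum_ite_eq, Finset.sum_ite_eq',
    Finset.mem_univ, if_true, ← AddChar.map_add_eq_mul]
  ring_nf

lemma chirp_semiconjBy_weyl {f : R → R} (hf : ∀ k l, f (k + l) = f k + f l + k * l) (v : R × R) :
    SemiconjBy (chirp χ f) (weyl χ v) (χ (f v.1) • weyl χ (v.1, v.2 + v.1)) := by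
  ext k l
  simp only [chirp, diagonal_mul, mul_diagonal, weyl_apply, Matrix.smul_apply, smul_eq_mul, mul_ite,
    ite_mul, mul_zero, zero_mul, ← AddChar.map_add_eq_mul]
  split_ifs with h
  · rw [h, hf]
    ring_nf
  · rfl

/-- The group of invertible matrices acting by conjugation on the Weyl operators through an
automorphism of phase space, up to phases in the range of `χ`. -/
def weylNormalizer : Subgroup (GL R 𝕜) where
  carrier := {g | ∃ α : (R × R) ≃+ (R × R), ∀ v, ∃ t,
    SemiconjBy (g : Matrix R R 𝕜) (weyl χ v) (χ t • weyl χ (α v))}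
  one_mem' := ⟨AddEquiv.refl _, fun v => ⟨0, by simp⟩⟩
  mul_mem' := by
    rintro g h ⟨α, hα⟩ ⟨β, hβ⟩
    refine ⟨β.trans α, fun v => ?_⟩
    obtain ⟨s, hs⟩ := hβ v
    obtain ⟨t, ht⟩ := hα (β v)
    refine ⟨s + t, ?_⟩
    rw [AddChar.map_add_eq_mul, mul_smul]
    exact (ht.smul_right (χ s)).mul_left hs
  inv_mem' := by
    rintro g ⟨α, hα⟩
    refine ⟨α.symm, fun v => ?_⟩
    obtain ⟨t, ht⟩ := hα (α.symm v)
    refine ⟨-t, ?_⟩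
    simpa [smul_smul, ← AddChar.map_add_eq_mul] using
      (ht.units_inv_symm_left.smul_right (χ (-t)))

variable {χ}

lemma mem_weylNormalizer_of_eq_smul_fourierMatrix {g : GL R 𝕜} {c : 𝕜}
    (hg : (g : Matrix R R 𝕜) = c • fourierMatrix χ) : g ∈ weylNormalizer χ := by
  refine ⟨AddEquiv.prodComm.trans ((AddEquiv.neg R).prodCongr (AddEquiv.refl R)),
    fun v => ⟨-(v.1 * v.2), ?_⟩⟩
  rw [hg]
  exact (fourierMatrix_semiconjBy_weyl χ v).smul_left c

/-- The shear `(i, j) ↦ (i, j + i)` of phase space. -/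
def shear : (R × R) ≃+ (R × R) where
  toFun v := (v.1, v.2 + v.1)
  invFun v := (v.1, v.2 - v.1)
  left_inv v := by simp
  right_inv v := by simp
  map_add' v w := by simp [add_add_add_comm]

lemma mem_weylNormalizer_of_eq_smul_chirp {g : GL R 𝕜} {c : 𝕜} {f : R → R}
    (hf : ∀ k l, f (k + l) = f k + f l + k * l)
    (hg : (g : Matrix R R 𝕜) = c • chirp χ f) : g ∈ weylNormalizer χ := by
  refine ⟨shear, fun v => ⟨f v.1, ?_⟩⟩
  rw [hg]
  exact (chirp_semiconjBy_weyl χ hf v).smul_left c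

end Weyl

section Unitary

variable {R : Type*} [CommRing R] [Fintype R] [DecidableEq R]

lemma fourierMatrix_mul_conjTranspose {χ : AddChar R ℂ} (hχ : χ.IsPrimitive) :
    fourierMatrix χ * (fourierMatrix χ)ᴴ = (Fintype.card R : ℂ) • 1 := by
  ext k l
  have h (m : R) : χ (k * m) * starRingEnd ℂ (χ (l * m)) = χ (m * (k - l)) := by
    rw [← AddChar.map_neg_eq_conj, ← AddChar.map_add_eq_mul]
    ring_nf
  simpa [fourierMatrix, mul_apply, h, Matrix.one_apply, sub_eq_zero]
    using AddChar.sum_mulShift (k - l) hχ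

lemma smul_fourierMatrix_mem_unitary {χ : AddChar R ℂ} (hχ : χ.IsPrimitive) {c : ℂ}
    (hc : c * star c * Fintype.card R = 1) :
    c • fourierMatrix χ ∈ unitary (Matrix R R ℂ) := by
  rw [← unitaryGroup, mem_unitaryGroup_iff, star_eq_conjTranspose, conjTranspose_smul,
    smul_mul_smul_comm, fourierMatrix_mul_conjTranspose hχ, smul_smul, hc, one_smul]

lemma chirp_mem_unitary (χ : AddChar R ℂ) (f : R → R) : chirp χ f ∈ unitary (Matrix R R ℂ) := by
  rw [← unitaryGroup, mem_unitaryGroup_iff]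
  simp [chirp, star_eq_conjTranspose, diagonal_conjTranspose, Complex.mul_conj', Pi.star_def]

end Unitary

section Qutrit

open scoped Fin.CommRing

lemma isPrimitiveRoot_omega : IsPrimitiveRoot ω 3 := by
  simpa [ω] using Complex.isPrimitiveRoot_exp 3 (by norm_num)

/-- The additive character `k ↦ ω ^ k` of `ℤ/3`, with `ℤ/3` realised as the index type `Fin 3`. -/
def omegaChar : AddChar (Fin 3) ℂ := AddChar.zmodChar 3 omega_cube

lemma omegaChar_apply (k : Fin 3) : omegaChar k = ω ^ (k : ℕ) := rfl

lemma isPrimitive_omegaChar : omegaChar.IsPrimitive :=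
  AddChar.zmodChar_primitive_of_primitive_root 3 isPrimitiveRoot_omega

lemma omegaChar_pow_three (t : Fin 3) : omegaChar t ^ 3 = 1 := by
  rw [omegaChar_apply, pow_right_comm, omega_cube, one_pow]

lemma Xmat_eq_weyl : Xmat = weyl omegaChar (1, 0) := by
  ext k l
  fin_cases k <;> fin_cases l <;> simp [Xmat, weyl_apply]

lemma Zmat_eq_weyl : Zmat = weyl omegaChar (0, 1) := by
  ext k l
  fin_cases k <;> fin_cases l <;> simp [Zmat, weyl_apply, omegaChar_apply]

lemma Hmat_eq_smul_fourierMatrix :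
    Hmat = (I * (Real.sqrt 3 : ℂ))⁻¹ • fourierMatrix omegaChar := by
  rw [Hmat]
  congr 1
  ext k l
  fin_cases k <;> fin_cases l <;> simp [fourierMatrix, omegaChar_apply]

lemma Smat_eq_smul_chirp : Smat = ζ ^ 8 • chirp omegaChar (fun k => k * (1 - k)) := by
  rw [Smat]
  congr 1
  ext k l
  fin_cases k <;> fin_cases l <;> simp [chirp, omegaChar_apply]

lemma Hg_mem_weylNormalizer : Hg ∈ weylNormalizer omegaChar :=
  mem_weylNormalizer_of_eq_smul_fourierMatrix Hmat_eq_smul_fourierMatrix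

lemma Sg_mem_weylNormalizer : Sg ∈ weylNormalizer omegaChar :=
  mem_weylNormalizer_of_eq_smul_chirp (by decide) Smat_eq_smul_chirp

lemma Cliff_le_weylNormalizer : Cliff ≤ weylNormalizer omegaChar :=
  (Subgroup.closure_le _).2 <| Set.pair_subset Hg_mem_weylNormalizer Sg_mem_weylNormalizer

lemma Hmat_mem_unitary : Hmat ∈ unitary (Matrix (Fin 3) (Fin 3) ℂ) := by
  have h3 : (Real.sqrt 3 : ℂ) ^ 2 = 3 := mod_cast Real.sq_sqrt zero_le_three
  rw [Hmat_eq_smul_fourierMatrix]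
  refine smul_fourierMatrix_mem_unitary isPrimitive_omegaChar ?_
  simp only [RCLike.star_def, map_inv₀, map_mul, conj_I, conj_ofReal, Fintype.card_fin]
  grind [I_sq]

lemma zeta_mem_unitary : ζ ∈ unitary ℂ := by
  have h : ‖ζ‖ = 1 := by
    simpa [ζ, mul_div_right_comm] using norm_exp_ofReal_mul_I (2 * Real.pi / 9)
  rw [Unitary.mem_iff_self_mul_star, RCLike.star_def, mul_conj', h, ofReal_one, one_pow]

lemma Smat_mem_unitary : Smat ∈ unitary (Matrix (Fin 3) (Fin 3) ℂ) := by
  rw [Smat_eq_smul_chirp]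
  exact Unitary.smul_mem_of_mem (pow_mem zeta_mem_unitary 8) (chirp_mem_unitary _ _)

lemma Cliff_le_unitarySubgroup : Cliff ≤ unitarySubgroup (GL (Fin 3) ℂ) := by
  refine (Subgroup.closure_le _).2 (Set.pair_subset ?_ ?_) <;>
    rw [SetLike.mem_coe, mem_unitarySubgroup_iff, Units.unitary_eq]
  · exact Hmat_mem_unitary
  · exact Smat_mem_unitary

lemma mul_conjTranspose_of_mem_Cliff {C : GL (Fin 3) ℂ} (hC : C ∈ Cliff) :
    (C : Matrix (Fin 3) (Fin 3) ℂ) * (C : Matrix (Fin 3) (Fin 3) ℂ)ᴴ = 1 :=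
  congrArg Units.val (Unitary.mul_star_self_of_mem (Cliff_le_unitarySubgroup hC))

lemma weyl_omegaChar_sq (v : Fin 3 × Fin 3) :
    weyl omegaChar v ^ 2 = omegaChar (v.2 * v.1) • weyl omegaChar (-v) := by
  have h : 2 • v = -v := by revert v; decide
  rw [weyl_sq, h]

lemma weyl_omegaChar_neg (v : Fin 3 × Fin 3) :
    weyl omegaChar (-v) = omegaChar (-(v.2 * v.1)) • weyl omegaChar v ^ 2 := by
  rw [weyl_omegaChar_sq, smul_smul, ← AddChar.map_add_eq_mul, neg_add_cancel,
    AddChar.map_zero_eq_one, one_smul]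

lemma weyl_omegaChar_pow_three (v : Fin 3 × Fin 3) : weyl omegaChar v ^ 3 = 1 := by
  rw [pow_succ, weyl_omegaChar_sq, smul_mul_assoc, weyl_mul, smul_smul, ← AddChar.map_add_eq_mul,
    neg_add_cancel, weyl_zero, Prod.snd_neg, neg_mul, add_neg_cancel, AddChar.map_zero_eq_one,
    one_smul]

/-- Representatives of the four lines through the origin of the phase space `(ℤ/3)²`. -/
def lineRep : Fin 4 → Fin 3 × Fin 3 := ![(0, 1), (1, 0), (1, 1), (1, 2)]

lemma exists_eq_lineRep_or_neg :
    ∀ v : Fin 3 × Fin 3, v ≠ 0 → ∃ a, v = lineRep a ∨ v = -lineRep a := by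
  decide

lemma lineRep_ne_zero : ∀ a, lineRep a ≠ 0 := by decide

lemma lineRep_injective : Function.Injective lineRep := by decide

lemma lineRep_ne_neg : ∀ a b, lineRep a ≠ -lineRep b := by decide

lemma exists_perm_map_lineRep (α : Fin 3 × Fin 3 ≃+ Fin 3 × Fin 3) :
    ∃ σ : Equiv.Perm (Fin 4),
      ∀ a, α (lineRep a) = lineRep (σ a) ∨ α (lineRep a) = -lineRep (σ a) := by
  have h (a) := exists_eq_lineRep_or_neg (α (lineRep a)) (by simp [lineRep_ne_zero])
  choose σ hσ using h
  have hinj : Function.Injective σ := by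
    intro a b hab
    have h : α (lineRep a) = α (lineRep b) ∨ α (lineRep a) = α (-lineRep b) := by
      rcases hσ a with ha | ha <;> rcases hσ b with hb | hb <;> simp [ha, hb, hab]
    simpa only [α.injective.eq_iff, lineRep_injective.eq_iff, lineRep_ne_neg, or_false] using h
  exact ⟨Equiv.ofBijective σ (Finite.injective_iff_bijective.1 hinj), hσ⟩

/-- The four Pauli operators `Z, X, XZ, XZ²` from which the basis `Q` is built. -/
def pauli : Fin 4 → Matrix (Fin 3) (Fin 3) ℂ :=
  ![Zmat, Xmat, Xmat * Zmat, Xmat * Zmat ^ 2]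

lemma pauli_eq_weyl (a : Fin 4) : pauli a = weyl omegaChar (lineRep a) := by
  fin_cases a <;>
    simp [pauli, lineRep, Xmat_eq_weyl, Zmat_eq_weyl, weyl_mul, weyl_sq]

lemma pauli_pow_three (a : Fin 4) : pauli a ^ 3 = 1 := by
  rw [pauli_eq_weyl, weyl_omegaChar_pow_three]

lemma trace_weyl_omegaChar_of_ne_zero {v : Fin 3 × Fin 3} (hv : v ≠ 0) :
    trace (weyl omegaChar v) = 0 := by
  rw [trace_weyl isPrimitive_omegaChar, if_neg hv]

lemma trace_pauli_mul_pauli (a b : Fin 4) : trace (pauli a * pauli b) = 0 := by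
  have h : lineRep a + lineRep b ≠ 0 := by
    simpa [add_eq_zero_iff_eq_neg] using lineRep_ne_neg a b
  rw [pauli_eq_weyl, pauli_eq_weyl, weyl_mul, trace_smul, trace_weyl_omegaChar_of_ne_zero h,
    smul_zero]

lemma trace_pauli_mul_pauli_sq (a b : Fin 4) :
    trace (pauli a * pauli b ^ 2) = if a = b then 3 else 0 := by
  split_ifs with hab
  · rw [hab, ← pow_succ', pauli_pow_three, trace_one, Fintype.card_fin, Nat.cast_ofNat]
  · have h : lineRep a + -lineRep b ≠ 0 := by
      simpa [← sub_eq_add_neg, sub_eq_zero] using lineRep_injective.ne hab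
    rw [pauli_eq_weyl, pauli_eq_weyl, weyl_omegaChar_sq, mul_smul_comm, weyl_mul, trace_smul,
      trace_smul, trace_weyl_omegaChar_of_ne_zero h, smul_zero, smul_zero]

lemma trace_pauli_sq_mul_pauli_sq (a b : Fin 4) : trace (pauli a ^ 2 * pauli b ^ 2) = 0 := by
  have h : -lineRep a + -lineRep b ≠ 0 := by
    simpa [neg_add_eq_zero] using lineRep_ne_neg a b
  rw [pauli_eq_weyl, pauli_eq_weyl, weyl_omegaChar_sq, weyl_omegaChar_sq, smul_mul_smul_comm,
    weyl_mul, trace_smul, trace_smul, trace_weyl_omegaChar_of_ne_zero h, smul_zero, smul_zero]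

lemma exists_semiconjBy_pauli {C : GL (Fin 3) ℂ} (hC : C ∈ Cliff) :
    ∃ σ : Equiv.Perm (Fin 4), ∀ a, ∃ z : ℂ, z ^ 3 = 1 ∧
      ∃ A, (A = z • pauli (σ a) ∨ A = z • pauli (σ a) ^ 2) ∧
        SemiconjBy (C : Matrix (Fin 3) (Fin 3) ℂ) (pauli a) A := by
  obtain ⟨α, hα⟩ := Cliff_le_weylNormalizer hC
  obtain ⟨σ, hσ⟩ := exists_perm_map_lineRep α
  refine ⟨σ, fun a => ?_⟩
  obtain ⟨t, ht⟩ := hα (lineRep a)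
  rw [pauli_eq_weyl, pauli_eq_weyl]
  rcases hσ a with h | h
  · exact ⟨omegaChar t, omegaChar_pow_three t, _, .inl rfl, h ▸ ht⟩
  · rw [h, weyl_omegaChar_neg, smul_smul, ← AddChar.map_add_eq_mul] at ht
    exact ⟨_, omegaChar_pow_three _, _, .inr rfl, ht⟩

end Qutrit

section HermitianPair

variable {P A B : Matrix (Fin 3) (Fin 3) ℂ} {z : ℂ}

lemma semiconjBy_Pplus (h : SemiconjBy B P A) : SemiconjBy B (Pplus P) (Pplus A) :=
  (h.add_right (h.pow_right 2)).smul_right _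

lemma semiconjBy_Pminus (h : SemiconjBy B P A) : SemiconjBy B (Pminus P) (Pminus A) :=
  (h.sub_right (h.pow_right 2)).smul_right _

lemma Pplus_sq (hP : P ^ 3 = 1) : Pplus (P ^ 2) = Pplus P := by
  have h4 : (P ^ 2) ^ 2 = P := by rw [← pow_mul, pow_succ, hP, one_mul]
  rw [Pplus, Pplus, h4, add_comm]

lemma Pminus_sq (hP : P ^ 3 = 1) : Pminus (P ^ 2) = -Pminus P := by
  have h4 : (P ^ 2) ^ 2 = P := by rw [← pow_mul, pow_succ, hP, one_mul]
  rw [Pminus, Pminus, h4, ← smul_neg, neg_sub]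

lemma sq_eq_conj_of_pow_three_eq_one (hz : z ^ 3 = 1) : z ^ 2 = starRingEnd ℂ z := by
  have h : z * starRingEnd ℂ z = 1 := by
    rw [mul_conj', norm_eq_one_of_pow_eq_one hz three_ne_zero, ofReal_one, one_pow]
  linear_combination -z ^ 2 * h + starRingEnd ℂ z * hz

lemma add_sq_of_pow_three_eq_one (hz : z ^ 3 = 1) : z + z ^ 2 = 2 * z.re := by
  rw [sq_eq_conj_of_pow_three_eq_one hz, add_conj, ofReal_mul, ofReal_ofNat]

lemma sub_sq_of_pow_three_eq_one (hz : z ^ 3 = 1) : z - z ^ 2 = 2 * z.im * I := by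
  rw [sq_eq_conj_of_pow_three_eq_one hz, sub_conj, ofReal_mul, ofReal_ofNat]

lemma Pplus_smul (hz : z ^ 3 = 1) : Pplus (z • P) = z.re • Pplus P + z.im • Pminus P := by
  ext k l
  simp only [Pplus, Pminus, smul_pow, Matrix.smul_apply, Matrix.add_apply, Matrix.sub_apply,
    smul_eq_mul, real_smul]
  linear_combination (Real.sqrt 6 : ℂ)⁻¹ / 2 *
    ((P k l + (P ^ 2) k l) * add_sq_of_pow_three_eq_one hz +
      (P k l - (P ^ 2) k l) * sub_sq_of_pow_three_eq_one hz)

lemma Pminus_smul (hz : z ^ 3 = 1) : Pminus (z • P) = z.re • Pminus P - z.im • Pplus P := by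
  ext k l
  simp only [Pplus, Pminus, smul_pow, Matrix.smul_apply, Matrix.add_apply, Matrix.sub_apply,
    smul_eq_mul, real_smul]
  linear_combination (Real.sqrt 6 : ℂ)⁻¹ / 2 * I *
    ((P k l - (P ^ 2) k l) * add_sq_of_pow_three_eq_one hz +
      (P k l + (P ^ 2) k l) * sub_sq_of_pow_three_eq_one hz) +
    (Real.sqrt 6 : ℂ)⁻¹ * z.im * (P k l + (P ^ 2) k l) * I_sq

lemma exists_sign_Pplus_Pminus (hP : P ^ 3 = 1) (hz : z ^ 3 = 1)
    (hA : A = z • P ∨ A = z • P ^ 2) :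
    ∃ ε : ℤˣ, Pplus A = z.re • Pplus P + (ε • z.im) • Pminus P ∧
      Pminus A = (-z.im) • Pplus P + (ε • z.re) • Pminus P := by
  rcases hA with rfl | rfl
  · refine ⟨1, ?_, ?_⟩
    · rw [Pplus_smul hz, one_smul]
    · rw [Pminus_smul hz, one_smul, neg_smul, neg_add_eq_sub]
  · refine ⟨-1, ?_, ?_⟩
    · rw [Pplus_smul hz, Pplus_sq hP, Pminus_sq hP, Units.neg_smul, one_smul, smul_neg, neg_smul]
    · rw [Pminus_smul hz, Pplus_sq hP, Pminus_sq hP, Units.neg_smul, one_smul, smul_neg, neg_smul,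
        neg_smul]
      abel

end HermitianPair

lemma Q_castAdd (a : Fin 4) : Q (a.castAdd 4) = Pplus (pauli a) := by
  fin_cases a <;> rfl

lemma Q_addNat (a : Fin 4) : Q (a.addNat 4) = Pminus (pauli a) := by
  fin_cases a <;> rfl

lemma inv_sqrt_six_mul_self : (Real.sqrt 6 : ℂ)⁻¹ * (Real.sqrt 6 : ℂ)⁻¹ = 1 / 6 := by
  rw [← mul_inv, ← ofReal_mul, Real.mul_self_sqrt (by norm_num), ofReal_ofNat, one_div]

lemma trace_Pplus_mul_Pplus (a b : Fin 4) :
    trace (Pplus (pauli a) * Pplus (pauli b)) = if a = b then 1 else 0 := by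
  rw [Pplus, Pplus, smul_mul_smul_comm, inv_sqrt_six_mul_self]
  simp only [add_mul, mul_add, trace_smul, trace_add, trace_pauli_mul_pauli,
    trace_pauli_mul_pauli_sq, trace_pauli_sq_mul_pauli_sq, trace_mul_comm (pauli a ^ 2) (pauli b),
    eq_comm (a := b)]
  split_ifs <;> norm_num

lemma trace_Pplus_mul_Pminus (a b : Fin 4) : trace (Pplus (pauli a) * Pminus (pauli b)) = 0 := by
  rw [Pplus, Pminus, smul_mul_smul_comm, trace_smul]
  simp only [add_mul, mul_sub, trace_sub, trace_add, trace_pauli_mul_pauli,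
    trace_pauli_mul_pauli_sq, trace_pauli_sq_mul_pauli_sq, trace_mul_comm (pauli a ^ 2) (pauli b),
    eq_comm (a := b)]
  simp

lemma trace_Pminus_mul_Pminus (a b : Fin 4) :
    trace (Pminus (pauli a) * Pminus (pauli b)) = if a = b then 1 else 0 := by
  rw [Pminus, Pminus, smul_mul_smul_comm, mul_mul_mul_comm, inv_sqrt_six_mul_self, I_mul_I]
  simp only [sub_mul, mul_sub, trace_smul, trace_sub, trace_pauli_mul_pauli,
    trace_pauli_mul_pauli_sq, trace_pauli_sq_mul_pauli_sq, trace_mul_comm (pauli a ^ 2) (pauli b),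
    eq_comm (a := b)]
  split_ifs <;> norm_num

lemma re_trace_Pplus_mul (a b : Fin 4) (x y : ℝ) :
    (trace (Pplus (pauli a) * (x • Pplus (pauli b) + y • Pminus (pauli b)))).re =
      if a = b then x else 0 := by
  rw [mul_add, mul_smul_comm, mul_smul_comm, trace_add, trace_smul, trace_smul,
    trace_Pplus_mul_Pplus, trace_Pplus_mul_Pminus]
  split_ifs <;> simp

lemma re_trace_Pminus_mul (a b : Fin 4) (x y : ℝ) :
    (trace (Pminus (pauli a) * (x • Pplus (pauli b) + y • Pminus (pauli b)))).re =
      if a = b then y else 0 := by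
  rw [mul_add, mul_smul_comm, mul_smul_comm, trace_add, trace_smul, trace_smul,
    trace_Pminus_mul_Pminus, trace_mul_comm, trace_Pplus_mul_Pminus]
  split_ifs <;> simp

lemma adj_apply_of_semiconjBy {U A : Matrix (Fin 3) (Fin 3) ℂ} (hU : U * Uᴴ = 1) {j : Fin 8}
    (h : SemiconjBy U (Q j) A) (i : Fin 8) : adj U i j = (trace (Q i * A)).re := by
  rw [adj, of_apply, Matrix.mul_assoc (Q i), h.eq, ← Matrix.mul_assoc, Matrix.mul_assoc, hU,
    Matrix.mul_one]

section MonomialMatrix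

variable {n R : Type*} [DecidableEq n] [Zero R]

/-- The generalized permutation matrix carrying the entry `d j` in row `σ j` of column `j`. Some of
the `d j` may vanish, in which case it is only a partial generalized permutation matrix. -/
def monomialMatrix (σ : Equiv.Perm n) (d : n → R) : Matrix n n R :=
  of fun i j => if i = σ j then d j else 0

variable {σ : Equiv.Perm n} {d e : n → R} {i i₁ i₂ j j₁ j₂ : n}

lemma monomialMatrix_apply_ne_zero_iff : monomialMatrix σ d i j ≠ 0 ↔ i = σ j ∧ d j ≠ 0 := by
  simp [monomialMatrix]

lemma monomialMatrix_existsUnique_row (hd : ∀ j, d j ≠ 0) (i : n) :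
    ∃! j, monomialMatrix σ d i j ≠ 0 := by
  simpa [monomialMatrix_apply_ne_zero_iff, hd, eq_comm] using σ.bijective.existsUnique i

lemma monomialMatrix_existsUnique_col (hd : ∀ j, d j ≠ 0) (j : n) :
    ∃! i, monomialMatrix σ d i j ≠ 0 := by
  simp [monomialMatrix_apply_ne_zero_iff, hd]

lemma monomialMatrix_row_unique (h₁ : monomialMatrix σ d i j₁ ≠ 0)
    (h₂ : monomialMatrix σ d i j₂ ≠ 0) : j₁ = j₂ := by
  rw [monomialMatrix_apply_ne_zero_iff] at h₁ h₂
  exact σ.injective (h₁.1.symm.trans h₂.1)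

lemma monomialMatrix_col_unique (h₁ : monomialMatrix σ d i₁ j ≠ 0)
    (h₂ : monomialMatrix σ d i₂ j ≠ 0) : i₁ = i₂ := by
  rw [monomialMatrix_apply_ne_zero_iff] at h₁ h₂
  exact h₁.1.trans h₂.1.symm

lemma monomialMatrix_mem_of_ne_zero {S : Set R} (hd : ∀ j, d j ≠ 0 → d j ∈ S)
    (h : monomialMatrix σ d i j ≠ 0) : monomialMatrix σ d i j ∈ S := by
  obtain ⟨rfl, hj⟩ := monomialMatrix_apply_ne_zero_iff.1 h
  simpa [monomialMatrix] using hd j hj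

lemma monomialMatrix_ne_zero_congr (h : ∀ j, d j ≠ 0 ↔ e j ≠ 0) (i j : n) :
    monomialMatrix σ d i j ≠ 0 ↔ monomialMatrix σ e i j ≠ 0 := by
  rw [monomialMatrix_apply_ne_zero_iff, monomialMatrix_apply_ne_zero_iff, h]

end MonomialMatrix

lemma exists_semiconjBy_Pplus_Pminus {C : GL (Fin 3) ℂ} (hC : C ∈ Cliff) :
    ∃ σ : Equiv.Perm (Fin 4), ∀ a, ∃ z : ℂ, ∃ ε : ℤˣ, z ^ 3 = 1 ∧
      SemiconjBy C.val (Pplus (pauli a))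
        (z.re • Pplus (pauli (σ a)) + (ε • z.im) • Pminus (pauli (σ a))) ∧
      SemiconjBy C.val (Pminus (pauli a))
        ((-z.im) • Pplus (pauli (σ a)) + (ε • z.re) • Pminus (pauli (σ a))) := by
  obtain ⟨σ, hσ⟩ := exists_semiconjBy_pauli hC
  refine ⟨σ, fun a => ?_⟩
  obtain ⟨z, hz, A, hA, h⟩ := hσ a
  obtain ⟨ε, hplus, hminus⟩ := exists_sign_Pplus_Pminus (pauli_pow_three (σ a)) hz hA
  exact ⟨z, ε, hz, hplus ▸ semiconjBy_Pplus h, hminus ▸ semiconjBy_Pminus h⟩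

lemma exists_adj_blocks_eq_monomialMatrix {C : GL (Fin 3) ℂ} (hC : C ∈ Cliff) :
    ∃ (σ : Equiv.Perm (Fin 4)) (z : Fin 4 → ℂ) (ε : Fin 4 → ℤˣ), (∀ a, z a ^ 3 = 1) ∧
      blockPP (adj C) = monomialMatrix σ (fun a => (z a).re) ∧
      blockPM (adj C) = monomialMatrix σ (fun a => -(z a).im) ∧
      blockMP (adj C) = monomialMatrix σ (fun a => ε a • (z a).im) ∧
      blockMM (adj C) = monomialMatrix σ (fun a => ε a • (z a).re) := by
  obtain ⟨σ, hσ⟩ := exists_semiconjBy_Pplus_Pminus hC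
  choose z ε hz hplus hminus using hσ
  have hplus_col (i : Fin 8) (a : Fin 4) := adj_apply_of_semiconjBy
    (mul_conjTranspose_of_mem_Cliff hC) (Q_castAdd a ▸ hplus a) i
  have hminus_col (i : Fin 8) (a : Fin 4) := adj_apply_of_semiconjBy
    (mul_conjTranspose_of_mem_Cliff hC) (Q_addNat a ▸ hminus a) i
  refine ⟨σ, z, ε, hz, ?_, ?_, ?_, ?_⟩ <;> ext i a
  · exact (hplus_col (i.castAdd 4) a).trans (by rw [Q_castAdd, re_trace_Pplus_mul]; rfl)
  · exact (hminus_col (i.castAdd 4) a).trans (by rw [Q_castAdd, re_trace_Pplus_mul]; rfl)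
  · exact (hplus_col (i.addNat 4) a).trans (by rw [Q_addNat, re_trace_Pminus_mul]; rfl)
  · exact (hminus_col (i.addNat 4) a).trans (by rw [Q_addNat, re_trace_Pminus_mul]; rfl)

section CubeRootsOfUnity

variable {z : ℂ}

lemma re_sq_add_im_sq_of_pow_three_eq_one (hz : z ^ 3 = 1) : z.re ^ 2 + z.im ^ 2 = 1 := by
  rw [sq z.re, sq z.im, ← normSq_apply, normSq_eq_norm_sq,
    norm_eq_one_of_pow_eq_one hz three_ne_zero, one_pow]

lemma re_of_pow_three_eq_one (hz : z ^ 3 = 1) : z.re = 1 ∨ z.re = -(1 / 2) := by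
  have hsq := congrArg re (sq_eq_conj_of_pow_three_eq_one hz)
  rw [sq, mul_re, conj_re] at hsq
  have h : (z.re - 1) * (z.re + 1 / 2) = 0 := by
    linear_combination (hsq + re_sq_add_im_sq_of_pow_three_eq_one hz) / 2
  simpa only [mul_eq_zero, sub_eq_zero, add_eq_zero_iff_eq_neg] using h

lemma im_of_pow_three_eq_one (hz : z ^ 3 = 1) :
    z.im = 0 ∨ z.im = Real.sqrt 3 / 2 ∨ z.im = -(Real.sqrt 3 / 2) := by
  have hnorm := re_sq_add_im_sq_of_pow_three_eq_one hz
  rcases re_of_pow_three_eq_one hz with h | h <;> rw [h] at hnorm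
  · exact .inl (by simpa using hnorm)
  · refine .inr (sq_eq_sq_iff_eq_or_eq_neg.1 ?_)
    rw [div_pow, Real.sq_sqrt zero_le_three]
    linear_combination hnorm

lemma re_ne_zero_of_pow_three_eq_one (hz : z ^ 3 = 1) : z.re ≠ 0 := by
  rcases re_of_pow_three_eq_one hz with h | h <;> simp [h]

lemma units_smul_re_mem_of_pow_three_eq_one (hz : z ^ 3 = 1) (ε : ℤˣ) :
    ε • z.re ∈ ({1, -1, 1 / 2, -(1 / 2)} : Set ℝ) := by
  rcases re_of_pow_three_eq_one hz with h | h <;> rcases Int.units_eq_one_or ε with rfl | rfl <;>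
    simp [h]

lemma re_mem_of_pow_three_eq_one (hz : z ^ 3 = 1) :
    z.re ∈ ({1, -1, 1 / 2, -(1 / 2)} : Set ℝ) := by
  simpa using units_smul_re_mem_of_pow_three_eq_one hz 1

lemma units_smul_im_mem_of_pow_three_eq_one (hz : z ^ 3 = 1) (ε : ℤˣ) (h₀ : ε • z.im ≠ 0) :
    ε • z.im ∈ ({Real.sqrt 3 / 2, -(Real.sqrt 3 / 2)} : Set ℝ) := by
  rcases im_of_pow_three_eq_one hz with h | h | h <;>
    rcases Int.units_eq_one_or ε with rfl | rfl <;> simp_all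

lemma neg_im_mem_of_pow_three_eq_one (hz : z ^ 3 = 1) (h₀ : -z.im ≠ 0) :
    -z.im ∈ ({Real.sqrt 3 / 2, -(Real.sqrt 3 / 2)} : Set ℝ) := by
  have hneg : (-1 : ℤˣ) • z.im = -z.im := by rw [Units.neg_smul, one_smul]
  exact hneg ▸ units_smul_im_mem_of_pow_three_eq_one hz (-1) (hneg ▸ h₀)

end CubeRootsOfUnity

lemma apply_mem_of_blocks {A : Matrix (Fin 8) (Fin 8) ℝ} {S : Set ℝ} (h₀ : 0 ∈ S)
    (hPP : ∀ i j, blockPP A i j ≠ 0 → blockPP A i j ∈ S)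
    (hMM : ∀ i j, blockMM A i j ≠ 0 → blockMM A i j ∈ S)
    (hPM : ∀ i j, blockPM A i j ≠ 0 → blockPM A i j ∈ S)
    (hMP : ∀ i j, blockMP A i j ≠ 0 → blockMP A i j ∈ S) (i j : Fin 8) : A i j ∈ S := by
  have hsplit : ∀ k : Fin 8, (∃ a : Fin 4, a.castAdd 4 = k) ∨ ∃ a : Fin 4, a.addNat 4 = k := by
    decide
  by_cases hA : A i j = 0
  · rwa [hA]
  obtain ⟨a, rfl⟩ | ⟨a, rfl⟩ := hsplit i <;> obtain ⟨b, rfl⟩ | ⟨b, rfl⟩ := hsplit j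
  · exact hPP a b hA
  · exact hPM a b hA
  · exact hMP a b hA
  · exact hMM a b hA

lemma adj_apply_mem_of_mem_Cliff {C : GL (Fin 3) ℂ} (hC : C ∈ Cliff) (i j : Fin 8) :
    adj C i j ∈ ({0, 1, -1, 1 / 2, -(1 / 2), Real.sqrt 3 / 2, -(Real.sqrt 3 / 2)} : Set ℝ) := by
  set S : Set ℝ := {0, 1, -1, 1 / 2, -(1 / 2), Real.sqrt 3 / 2, -(Real.sqrt 3 / 2)}
  have hrat : ({1, -1, 1 / 2, -(1 / 2)} : Set ℝ) ⊆ S := by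
    simp [S, Set.insert_subset_iff]
  have hirr : ({Real.sqrt 3 / 2, -(Real.sqrt 3 / 2)} : Set ℝ) ⊆ S := by
    simp [S, Set.insert_subset_iff]
  obtain ⟨σ, z, ε, hz, hPP, hPM, hMP, hMM⟩ := exists_adj_blocks_eq_monomialMatrix hC
  refine apply_mem_of_blocks (by simp [S]) ?_ ?_ ?_ ?_ i j <;> intro i j
  · exact hPP ▸ monomialMatrix_mem_of_ne_zero
      fun a _ => hrat (re_mem_of_pow_three_eq_one (hz a))
  · exact hMM ▸ monomialMatrix_mem_of_ne_zero
      fun a _ => hrat (units_smul_re_mem_of_pow_three_eq_one (hz a) (ε a))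
  · exact hPM ▸ monomialMatrix_mem_of_ne_zero
      fun a h => hirr (neg_im_mem_of_pow_three_eq_one (hz a) h)
  · exact hMP ▸ monomialMatrix_mem_of_ne_zero
      fun a h => hirr (units_smul_im_mem_of_pow_three_eq_one (hz a) (ε a) h)

lemma sqrt_three_div_two_mem_Zα : Real.sqrt 3 / 2 ∈ Zα := by
  have h : 3 * αR - 4 * αR ^ 3 = Real.sqrt 3 / 2 := by
    rw [αR, ← Real.sin_three_mul, ← Real.sin_pi_div_three, ← Real.sin_pi_sub]
    ring_nf
  rw [← h]
  exact sub_mem (mul_mem (ofNat_mem _ 3) alpha_mem_Zα)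
    (mul_mem (ofNat_mem _ 4) (pow_mem alpha_mem_Zα 3))

lemma entry_values_subset_Zα :
    ({0, 1, -1, 1 / 2, -(1 / 2), Real.sqrt 3 / 2, -(Real.sqrt 3 / 2)} : Set ℝ) ⊆ Zα := by
  have hhalf : (1 / 2 : ℝ) ∈ Zα := Subring.subset_closure (Set.mem_insert _ _)
  simp only [Set.insert_subset_iff, Set.singleton_subset_iff, SetLike.mem_coe, neg_mem_iff]
  exact ⟨zero_mem _, one_mem _, one_mem _, hhalf, hhalf, sqrt_three_div_two_mem_Zα,
    sqrt_three_div_two_mem_Zα⟩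

/-- For every element C of the Clifford group 𝒞: every entry of Ĉ
lies in {0, ±1, ±1/2, ±√3/2}; Ĉ₊₊ and Ĉ₋₋ are generalized permutation matrices with
nonzero entries in {±1, ±1/2} and with the same nonzero pattern; Ĉ₊₋ and Ĉ₋₊ have at
most one nonzero entry per row and per column, with nonzero entries in {±√3/2}, and
share the same nonzero pattern. In particular every entry of Ĉ lies in ℤ[α]. -/
theorem adjoint_of_clifford_structure :
    ∀ C ∈ Cliff,
      (∀ i j : Fin 8, adj (C : Matrix (Fin 3) (Fin 3) ℂ) i j ∈
        ({0, 1, -1, 1/2, -(1/2), Real.sqrt 3 / 2, -(Real.sqrt 3 / 2)} : Set ℝ)) ∧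
      (∀ i : Fin 4, ∃! j : Fin 4, blockPP (adj (C : Matrix (Fin 3) (Fin 3) ℂ)) i j ≠ 0) ∧
      (∀ j : Fin 4, ∃! i : Fin 4, blockPP (adj (C : Matrix (Fin 3) (Fin 3) ℂ)) i j ≠ 0) ∧
      (∀ i : Fin 4, ∃! j : Fin 4, blockMM (adj (C : Matrix (Fin 3) (Fin 3) ℂ)) i j ≠ 0) ∧
      (∀ j : Fin 4, ∃! i : Fin 4, blockMM (adj (C : Matrix (Fin 3) (Fin 3) ℂ)) i j ≠ 0) ∧
      (∀ i j : Fin 4, blockPP (adj (C : Matrix (Fin 3) (Fin 3) ℂ)) i j ≠ 0 →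
        blockPP (adj (C : Matrix (Fin 3) (Fin 3) ℂ)) i j ∈
          ({1, -1, 1/2, -(1/2)} : Set ℝ)) ∧
      (∀ i j : Fin 4, blockMM (adj (C : Matrix (Fin 3) (Fin 3) ℂ)) i j ≠ 0 →
        blockMM (adj (C : Matrix (Fin 3) (Fin 3) ℂ)) i j ∈
          ({1, -1, 1/2, -(1/2)} : Set ℝ)) ∧
      (∀ i j : Fin 4, blockPP (adj (C : Matrix (Fin 3) (Fin 3) ℂ)) i j ≠ 0 ↔
        blockMM (adj (C : Matrix (Fin 3) (Fin 3) ℂ)) i j ≠ 0) ∧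
      (∀ i : Fin 4, ∀ j₁ j₂ : Fin 4,
        blockPM (adj (C : Matrix (Fin 3) (Fin 3) ℂ)) i j₁ ≠ 0 →
        blockPM (adj (C : Matrix (Fin 3) (Fin 3) ℂ)) i j₂ ≠ 0 → j₁ = j₂) ∧
      (∀ j : Fin 4, ∀ i₁ i₂ : Fin 4,
        blockPM (adj (C : Matrix (Fin 3) (Fin 3) ℂ)) i₁ j ≠ 0 →
        blockPM (adj (C : Matrix (Fin 3) (Fin 3) ℂ)) i₂ j ≠ 0 → i₁ = i₂) ∧
      (∀ i : Fin 4, ∀ j₁ j₂ : Fin 4,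
        blockMP (adj (C : Matrix (Fin 3) (Fin 3) ℂ)) i j₁ ≠ 0 →
        blockMP (adj (C : Matrix (Fin 3) (Fin 3) ℂ)) i j₂ ≠ 0 → j₁ = j₂) ∧
      (∀ j : Fin 4, ∀ i₁ i₂ : Fin 4,
        blockMP (adj (C : Matrix (Fin 3) (Fin 3) ℂ)) i₁ j ≠ 0 →
        blockMP (adj (C : Matrix (Fin 3) (Fin 3) ℂ)) i₂ j ≠ 0 → i₁ = i₂) ∧
      (∀ i j : Fin 4, blockPM (adj (C : Matrix (Fin 3) (Fin 3) ℂ)) i j ≠ 0 →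
        blockPM (adj (C : Matrix (Fin 3) (Fin 3) ℂ)) i j ∈
          ({Real.sqrt 3 / 2, -(Real.sqrt 3 / 2)} : Set ℝ)) ∧
      (∀ i j : Fin 4, blockMP (adj (C : Matrix (Fin 3) (Fin 3) ℂ)) i j ≠ 0 →
        blockMP (adj (C : Matrix (Fin 3) (Fin 3) ℂ)) i j ∈
          ({Real.sqrt 3 / 2, -(Real.sqrt 3 / 2)} : Set ℝ)) ∧
      (∀ i j : Fin 4, blockPM (adj (C : Matrix (Fin 3) (Fin 3) ℂ)) i j ≠ 0 ↔
        blockMP (adj (C : Matrix (Fin 3) (Fin 3) ℂ)) i j ≠ 0) ∧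
      (∀ i j : Fin 8, adj (C : Matrix (Fin 3) (Fin 3) ℂ) i j ∈ Zα) := by
  intro C hC
  obtain ⟨σ, z, ε, hz, hPP, hPM, hMP, hMM⟩ := exists_adj_blocks_eq_monomialMatrix hC
  have hre₀ a : (z a).re ≠ 0 := re_ne_zero_of_pow_three_eq_one (hz a)
  have hεre₀ a : ε a • (z a).re ≠ 0 := (smul_ne_zero_iff_ne _).2 (hre₀ a)
  have him₀ a : -(z a).im ≠ 0 ↔ ε a • (z a).im ≠ 0 := by rw [neg_ne_zero, smul_ne_zero_iff_ne]
  rw [hPP, hPM, hMP, hMM]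
  exact ⟨adj_apply_mem_of_mem_Cliff hC,
    monomialMatrix_existsUnique_row hre₀, monomialMatrix_existsUnique_col hre₀,
    monomialMatrix_existsUnique_row hεre₀, monomialMatrix_existsUnique_col hεre₀,
    fun _ _ => monomialMatrix_mem_of_ne_zero fun a _ => re_mem_of_pow_three_eq_one (hz a),
    fun _ _ => monomialMatrix_mem_of_ne_zero
      fun a _ => units_smul_re_mem_of_pow_three_eq_one (hz a) (ε a),
    monomialMatrix_ne_zero_congr fun a => iff_of_true (hre₀ a) (hεre₀ a),
    fun _ _ _ => monomialMatrix_row_unique, fun _ _ _ => monomialMatrix_col_unique,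
    fun _ _ _ => monomialMatrix_row_unique, fun _ _ _ => monomialMatrix_col_unique,
    fun _ _ => monomialMatrix_mem_of_ne_zero fun a => neg_im_mem_of_pow_three_eq_one (hz a),
    fun _ _ => monomialMatrix_mem_of_ne_zero
      fun a => units_smul_im_mem_of_pow_three_eq_one (hz a) (ε a),
    monomialMatrix_ne_zero_congr him₀,
    fun i j => entry_values_subset_Zα (adj_apply_mem_of_mem_Cliff hC i j)⟩

end
end
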